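/- arXiv:2006.06643 — 2 statements merged into one kernel-verified Lean document; each statement's English description precedes it below -/
import Mathlib

section
/- Let f : ℝ^d → ℝ (Euclidean space) be measurable and bounded, and let σ > 0. Then the smoothed function F_σ(x) = ∫ f(z) dN(x, σ²I)(z) is differentiable at every x, with gradient ∇F_σ(x) = σ^(−2) ∫ (z − x) f(z) dN(x, σ²I)(z). -/
open MeasureTheory Metric

/-- The density of the isotropic Gaussian `N(0, σ²I)` on `ℝ^d`, evaluated at `u`. -/
noncomputable def gaussDensity {d : ℕ} (σ : ℝ) (u : EuclideanSpace ℝ (Fin d)) : ℝ :=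
  (2 * Real.pi * σ ^ 2) ^ (-(d : ℝ) / 2) * Real.exp (-‖u‖ ^ 2 / (2 * σ ^ 2))

/-! Differentiate under the integral sign. For `c < b`, completing the square in the exponent bounds
`‖z - y‖ * exp (-b * ‖z - y‖ ^ 2)` by a multiple of `exp (-c * ‖z - x‖ ^ 2)`, uniformly for `y` in
the unit ball around `x`. So `f` need only be integrable against a slightly wider Gaussian at `x`,
which bounded functions are. -/

open Filter InnerProductSpace Topology

theorem hasGradientAt_integral_of_dominated_of_gradient_le {𝕜 E α : Type*} [RCLike 𝕜]
    [NormedAddCommGroup E] [NormedSpace ℝ E] [InnerProductSpace 𝕜 E] [CompleteSpace E]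
    [MeasurableSpace α] {μ : Measure α} {F : E → α → 𝕜} {G : E → α → E} {bound : α → ℝ}
    {x : E} {s : Set E} (hs : s ∈ 𝓝 x)
    (hF_meas : ∀ᶠ y in 𝓝 x, AEStronglyMeasurable (F y) μ) (hF_int : Integrable (F x) μ)
    (hG_meas : AEStronglyMeasurable (G x) μ)
    (h_bound : ∀ᵐ a ∂μ, ∀ y ∈ s, ‖G y a‖ ≤ bound a) (bound_integrable : Integrable bound μ)
    (h_grad : ∀ᵐ a ∂μ, ∀ y ∈ s, HasGradientAt (F · a) (G y a) y) :
    HasGradientAt (fun y ↦ ∫ a, F y a ∂μ) (∫ a, G x a ∂μ) x := by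
  have hG_int : Integrable (G x) μ :=
    bound_integrable.mono' hG_meas (h_bound.mono fun a ha ↦ ha x (mem_of_mem_nhds hs))
  have h_fderiv : HasFDerivAt (fun y ↦ ∫ a, F y a ∂μ) (∫ a, toDual 𝕜 E (G x a) ∂μ) x :=
    hasFDerivAt_integral_of_dominated_of_fderiv_le (F' := fun y a ↦ toDual 𝕜 E (G y a)) hs
      hF_meas hF_int ((toDual 𝕜 E).continuous.comp_aestronglyMeasurable hG_meas)
      (by simpa only [LinearIsometryEquiv.norm_map] using h_bound) bound_integrable h_grad
  have h_toDual : ∫ a, toDual 𝕜 E (G x a) ∂μ = toDual 𝕜 E (∫ a, G x a ∂μ) :=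
    (toDual 𝕜 E).toContinuousLinearEquiv.toContinuousLinearMap.integral_comp_commSL
      RCLike.conj_smul hG_int
  rwa [h_toDual] at h_fderiv

theorem exists_forall_mul_exp_neg_mul_sq_le {b c : ℝ} (hcb : c < b) (r : ℝ) :
    ∃ K, ∀ s t : ℝ, |s - t| ≤ r →
      t * Real.exp (-b * t ^ 2) ≤ K * Real.exp (-c * s ^ 2) := by
  set M : ℝ := |c| * r ^ 2 + (1 + 2 * |c| * r) ^ 2 / (4 * (b - c))
  refine ⟨Real.exp M, fun s t hst ↦ ?_⟩
  have h_sq_sub : |c * (s ^ 2 - t ^ 2)| ≤ |c| * (r * (2 * |t| + r)) := by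
    have h_add : |s + t| ≤ 2 * |t| + r := by
      calc |s + t| = |2 * t + (s - t)| := by ring_nf
        _ ≤ |2 * t| + |s - t| := abs_add_le _ _
        _ ≤ 2 * |t| + r := by rw [abs_mul, abs_two]; gcongr
    rw [sq_sub_sq, abs_mul, abs_mul, mul_comm |s + t|]
    gcongr
    exact (abs_nonneg _).trans hst
  have h_quadratic : (1 + 2 * |c| * r) * |t| - (b - c) * t ^ 2 ≤
      (1 + 2 * |c| * r) ^ 2 / (4 * (b - c)) := by
    rw [le_div_iff₀ (by linarith), ← sq_abs t]
    nlinarith [sq_nonneg (1 + 2 * |c| * r - 2 * (b - c) * |t|)]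
  have h_exponent : t + -b * t ^ 2 ≤ M + -c * s ^ 2 := by
    linarith [le_abs_self t, le_abs_self (c * (s ^ 2 - t ^ 2))]
  calc t * Real.exp (-b * t ^ 2)
      ≤ Real.exp t * Real.exp (-b * t ^ 2) := by
        gcongr
        linarith [Real.add_one_le_exp t]
    _ = Real.exp (t + -b * t ^ 2) := (Real.exp_add _ _).symm
    _ ≤ Real.exp (M + -c * s ^ 2) := Real.exp_le_exp.2 h_exponent
    _ = Real.exp M * Real.exp (-c * s ^ 2) := Real.exp_add _ _

theorem exists_forall_norm_sub_mul_exp_neg_mul_sq_norm_sub_le {E : Type*}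
    [SeminormedAddCommGroup E] {b c : ℝ} (hcb : c < b) (r : ℝ) :
    ∃ K, ∀ x y z : E, ‖y - x‖ ≤ r →
      ‖z - y‖ * Real.exp (-b * ‖z - y‖ ^ 2) ≤ K * Real.exp (-c * ‖z - x‖ ^ 2) := by
  obtain ⟨K, hK⟩ := exists_forall_mul_exp_neg_mul_sq_le hcb r
  refine ⟨K, fun x y z hyx ↦ hK _ _ ?_⟩
  calc |‖z - x‖ - ‖z - y‖| ≤ ‖z - x - (z - y)‖ := abs_norm_sub_norm_le _ _
    _ = ‖y - x‖ := by rw [sub_sub_sub_cancel_left]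
    _ ≤ r := hyx

theorem hasGradientAt_exp_neg_mul_sq_norm_sub_mul_const {E : Type*} [NormedAddCommGroup E]
    [InnerProductSpace ℝ E] [CompleteSpace E] (b a : ℝ) (z y : E) :
    HasGradientAt (fun y ↦ Real.exp (-b * ‖z - y‖ ^ 2) * a)
      ((2 * b) • (Real.exp (-b * ‖z - y‖ ^ 2) • (a • (z - y)))) y := by
  refine ((((hasFDerivAt_id y).const_sub z).norm_sq.const_mul (-b)).exp.mul_const a).congr_fderiv ?_
  ext v
  simp only [id_eq, neg_mul, map_sub, ContinuousLinearMap.comp_neg, ContinuousLinearMap.comp_id,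
    neg_sub, neg_smul, smul_neg, neg_apply, smul_apply, sub_apply, coe_innerSL_apply, nsmul_eq_mul,
    Nat.cast_ofNat, smul_eq_mul, map_smul, toDual_apply_apply]
  ring

theorem hasGradientAt_integral_exp_neg_mul_sq_norm_sub_mul {E : Type*} [NormedAddCommGroup E]
    [InnerProductSpace ℝ E] [CompleteSpace E] [SecondCountableTopology E] [MeasurableSpace E]
    [BorelSpace E] {μ : Measure E} {b c : ℝ} (hcb : c < b) {f : E → ℝ} {x : E}
    (hf : Integrable (fun z ↦ Real.exp (-c * ‖z - x‖ ^ 2) * f z) μ) :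
    HasGradientAt (fun y ↦ ∫ z, Real.exp (-b * ‖z - y‖ ^ 2) * f z ∂μ)
      ((2 * b) • ∫ z, Real.exp (-b * ‖z - x‖ ^ 2) • (f z • (z - x)) ∂μ) x := by
  obtain ⟨K, hK⟩ := exists_forall_norm_sub_mul_exp_neg_mul_sq_norm_sub_le (E := E) hcb 1
  have hf_meas : AEStronglyMeasurable f μ := by
    have h_exp : Continuous fun z : E ↦ Real.exp (c * ‖z - x‖ ^ 2) := by fun_prop
    refine (h_exp.aestronglyMeasurable.mul hf.aestronglyMeasurable).congr (.of_forall fun z ↦ ?_)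
    simp [← mul_assoc, ← Real.exp_add]
  have h_exp_meas (y : E) : AEStronglyMeasurable (fun z ↦ Real.exp (-b * ‖z - y‖ ^ 2)) μ :=
    Continuous.aestronglyMeasurable (by fun_prop)
  have hF_int : Integrable (fun z ↦ Real.exp (-b * ‖z - x‖ ^ 2) * f z) μ := by
    refine hf.mono ((h_exp_meas x).mul hf_meas) (.of_forall fun z ↦ ?_)
    simp only [norm_mul, Real.norm_eq_abs, Real.abs_exp]
    gcongr
  have h_sub_meas : AEStronglyMeasurable (fun z ↦ z - x) μ :=
    Continuous.aestronglyMeasurable (by fun_prop)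
  have h_bound (z y : E) (hy : y ∈ ball x 1) :
      ‖(2 * b) • (Real.exp (-b * ‖z - y‖ ^ 2) • (f z • (z - y)))‖ ≤
        |2 * b| * K * ‖Real.exp (-c * ‖z - x‖ ^ 2) * f z‖ := by
    simp only [norm_smul, norm_mul (Real.exp _), Real.norm_eq_abs, Real.abs_exp]
    calc |2 * b| * (Real.exp (-b * ‖z - y‖ ^ 2) * (|f z| * ‖z - y‖))
        = |2 * b| * |f z| * (‖z - y‖ * Real.exp (-b * ‖z - y‖ ^ 2)) := by ring
      _ ≤ |2 * b| * |f z| * (K * Real.exp (-c * ‖z - x‖ ^ 2)) :=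
          mul_le_mul_of_nonneg_left (hK x y z (mem_ball_iff_norm.1 hy).le) (by positivity)
      _ = |2 * b| * K * (Real.exp (-c * ‖z - x‖ ^ 2) * |f z|) := by ring
  rw [← integral_smul]
  exact hasGradientAt_integral_of_dominated_of_gradient_le
    (G := fun y z ↦ (2 * b) • (Real.exp (-b * ‖z - y‖ ^ 2) • (f z • (z - y))))
    (ball_mem_nhds x one_pos) (.of_forall fun y ↦ (h_exp_meas y).mul hf_meas) hF_int
    (((h_exp_meas x).smul (hf_meas.smul h_sub_meas)).const_smul _) (.of_forall h_bound)
    (hf.norm.const_mul _)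
    (.of_forall fun z y _ ↦ hasGradientAt_exp_neg_mul_sq_norm_sub_mul_const b (f z) z y)

theorem integrable_exp_neg_mul_sq_norm {E : Type*} [NormedAddCommGroup E] [InnerProductSpace ℝ E]
    [FiniteDimensional ℝ E] [MeasurableSpace E] [BorelSpace E] {b : ℝ} (hb : 0 < b) :
    Integrable fun z : E ↦ Real.exp (-b * ‖z‖ ^ 2) := by
  have h_cexp := (GaussianFourier.integrable_cexp_neg_mul_sq_norm_add (b := (b : ℂ))
    (by simpa using hb) 0 (0 : E)).norm
  simpa [Complex.norm_exp, ← Complex.ofReal_pow] using h_cexp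

section gaussDensity

variable {d : ℕ}

theorem exists_pos_forall_gaussDensity_eq_mul_exp {σ : ℝ} (hσ : σ ≠ 0) :
    ∃ k > 0, ∀ u : EuclideanSpace ℝ (Fin d),
      gaussDensity σ u = k * Real.exp (-(1 / (2 * σ ^ 2)) * ‖u‖ ^ 2) :=
  ⟨(2 * Real.pi * σ ^ 2) ^ (-(d : ℝ) / 2), by positivity, fun u ↦ by
    rw [gaussDensity, neg_mul, one_div_mul_eq_div, neg_div (2 * σ ^ 2)]⟩

theorem integrable_gaussDensity {σ : ℝ} (hσ : σ ≠ 0) :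
    Integrable fun u : EuclideanSpace ℝ (Fin d) ↦ gaussDensity σ u := by
  obtain ⟨k, -, hk⟩ := exists_pos_forall_gaussDensity_eq_mul_exp (d := d) hσ
  simp only [hk]
  exact (integrable_exp_neg_mul_sq_norm (by positivity)).const_mul k

theorem smoothed_function_hasGradient_general {μ : Measure (EuclideanSpace ℝ (Fin d))}
    {f : EuclideanSpace ℝ (Fin d) → ℝ} {σ τ : ℝ} (hσ : 0 < σ) (hστ : σ < τ)
    {x : EuclideanSpace ℝ (Fin d)} (hf : Integrable (fun z ↦ gaussDensity τ (z - x) * f z) μ) :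
    HasGradientAt (fun y ↦ ∫ z, gaussDensity σ (z - y) * f z ∂μ)
      ((σ ^ 2)⁻¹ • ∫ z, gaussDensity σ (z - x) • (f z • (z - x)) ∂μ) x := by
  have hτ : 0 < τ := hσ.trans hστ
  have h_rate : 1 / (2 * τ ^ 2) < 1 / (2 * σ ^ 2) := by gcongr
  obtain ⟨k, -, hk⟩ := exists_pos_forall_gaussDensity_eq_mul_exp (d := d) hσ.ne'
  obtain ⟨l, hl_pos, hl⟩ := exists_pos_forall_gaussDensity_eq_mul_exp (d := d) hτ.ne'
  have hf_exp : Integrable (fun z ↦ Real.exp (-(1 / (2 * τ ^ 2)) * ‖z - x‖ ^ 2) * f z) μ := by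
    simp only [hl, mul_assoc] at hf
    exact (integrable_const_mul_iff hl_pos.ne'.isUnit _).1 hf
  have h_grad := hasGradientAt_integral_exp_neg_mul_sq_norm_sub_mul (f := fun z ↦ k * f z) h_rate
    (by simpa only [mul_left_comm] using hf_exp.const_mul k)
  have h_two_mul : 2 * (1 / (2 * σ ^ 2)) = (σ ^ 2)⁻¹ := by field_simp
  simpa only [hk, h_two_mul, smul_smul, mul_assoc, mul_left_comm] using h_grad

end gaussDensity

/-- For `f : ℝ^d → ℝ` measurable and bounded and `σ > 0`, the smoothed
function `F_σ(x) = ∫ f(z) dN(x, σ²I)(z)` is differentiable at every `x`, with gradient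
`∇F_σ(x) = σ⁻² ∫ (z − x) f(z) dN(x, σ²I)(z)`. -/
theorem smoothed_function_hasGradient {d : ℕ} (f : EuclideanSpace ℝ (Fin d) → ℝ)
    (σ : ℝ) (hσ : 0 < σ) (hf : Measurable f) (C : ℝ) (hfb : ∀ z, |f z| ≤ C)
    (x : EuclideanSpace ℝ (Fin d)) :
    HasGradientAt (fun y => ∫ z, gaussDensity σ (z - y) * f z)
      ((σ ^ 2)⁻¹ • ∫ z, gaussDensity σ (z - x) • (f z • (z - x))) x :=
  smoothed_function_hasGradient_general hσ (lt_add_one σ) <|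
    ((integrable_gaussDensity (by positivity)).comp_sub_right x).mul_bdd
      hf.aestronglyMeasurable (.of_forall hfb)
end

section
/- Let f : ℝ^d → ℝ (Euclidean space) be measurable with sup_{x ∈ ℝ^d} |f(x)| = F < ∞, let σ > 0, and let g(x) = ∇_x F_σ(x) be the gradient of the smoothed function F_σ(x) = ∫ f(z) dN(x, σ²I)(z). Then g is globally Lipschitz with constant at most 2F/σ²: for all x, x' ∈ ℝ^d, ‖g(x) − g(x')‖₂ ≤ (2F/σ²)·‖x − x'‖₂. (That is, the Smooth Gradient with standard deviation σ is λ-globally robust with λ ≤ 2F/σ².) -/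
open MeasureTheory Metric

/-!
The gradient of a Gaussian smoothing is a convolution, `∂ᵥF_σ = f ⋆ ∂ᵥφ`, so only the kernel needs
a second derivative: `∂ᵥF_σ(x) - ∂ᵥF_σ(y)` is at most `F` times the `L¹` distance between `∂ᵥφ` and
its translate by `h = x - y`, hence at most `F ∫ |D²φ(u)(h, v)| du`. For the Gaussian,
`D²φ(u)(h, v) = φ(u) (⟪u, h⟫⟪u, v⟫ / σ⁴ - ⟪h, v⟫ / σ²)`, and both terms have `L¹` norm at most
`‖h‖ ‖v‖ / σ²` because the Gaussian has variance `σ²` in every direction.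
-/

open Module Real
open scoped Convolution InnerProductSpace Nat

theorem nonneg_of_ae_norm_le {α G : Type*} [MeasurableSpace α] {μ : Measure α} [NeZero μ]
    [SeminormedAddGroup G] {f : α → G} {M : ℝ} (hf : ∀ᵐ t ∂μ, ‖f t‖ ≤ M) : 0 ≤ M := by
  obtain ⟨t, ht⟩ := hf.exists
  exact (norm_nonneg _).trans ht

theorem fderiv_fderiv_apply_const {E G : Type*} [NormedAddCommGroup E] [NormedSpace ℝ E]
    [NormedAddCommGroup G] [NormedSpace ℝ G] {g : E → G} {u : E}
    (hg : DifferentiableAt ℝ (fderiv ℝ g) u) (v h : E) :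
    fderiv ℝ (fun w ↦ fderiv ℝ g w v) u h = fderiv ℝ (fderiv ℝ g) u h v := by
  rw [fderiv_clm_apply hg (differentiableAt_const v)]
  simp

theorem integrable_of_norm_le_mul_one_add_norm_rpow_neg {E G : Type*} [NormedAddCommGroup E]
    [NormedSpace ℝ E] [FiniteDimensional ℝ E] [MeasurableSpace E] [BorelSpace E] {μ : Measure E}
    [μ.IsAddHaarMeasure] [NormedAddCommGroup G] {g : E → G} {C r : ℝ}
    (hg : AEStronglyMeasurable g μ) (hr : finrank ℝ E < r)
    (hdecay : ∀ u, ‖g u‖ ≤ C * (1 + ‖u‖) ^ (-r)) : Integrable g μ :=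
  ((integrable_one_add_norm hr).const_mul C).mono' hg (.of_forall hdecay)

section Convolution

variable {E F G H : Type*} [NormedAddCommGroup E] [NormedAddCommGroup F] [NormedSpace ℝ F]
  [NormedAddCommGroup G] [NormedSpace ℝ G] [NormedAddCommGroup H] [NormedSpace ℝ H]

theorem one_add_norm_rpow_neg_le {x y t : E} {r : ℝ} (hr : 0 ≤ r) (hy : y ∈ ball x 1) :
    (1 + ‖y - t‖) ^ (-r) ≤ 2 ^ r * (1 + ‖x - t‖) ^ (-r) := by
  have htriangle : 1 + ‖x - t‖ ≤ 2 * (1 + ‖y - t‖) := by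
    have hxy : ‖x - y‖ < 1 := by rwa [← dist_eq_norm, dist_comm]
    linarith [norm_sub_le_norm_sub_add_norm_sub x y t, norm_nonneg (y - t)]
  calc (1 + ‖y - t‖) ^ (-r) = 2 ^ r * (2 * (1 + ‖y - t‖)) ^ (-r) := by
        rw [mul_rpow (by positivity) (by positivity), ← mul_assoc,
          ← rpow_add two_pos, add_neg_cancel, rpow_zero, one_mul]
    _ ≤ 2 ^ r * (1 + ‖x - t‖) ^ (-r) := by
        gcongr ?_ * ?_
        exact rpow_le_rpow_of_nonpos (by positivity) htriangle (neg_nonpos.2 hr)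

theorem enorm_add_sub_self_le_lintegral_fderiv [NormedSpace ℝ E] {g : E → G} (hg : ContDiff ℝ 1 g)
    (u h : E) :
    ‖g (u + h) - g u‖ₑ ≤ ∫⁻ t in Set.Icc (0 : ℝ) 1, ‖fderiv ℝ g (u + t • h) h‖ₑ := by
  have hline (t : ℝ) : HasDerivAt (fun s : ℝ ↦ g (u + s • h)) (fderiv ℝ g (u + t • h) h) t := by
    have hpath : HasDerivAt (fun s : ℝ ↦ u + s • h) h t := by
      simpa using ((hasDerivAt_id t).smul_const h).const_add u
    exact (hg.differentiable one_ne_zero _).hasFDerivAt.comp_hasDerivAt t hpath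
  have hsmooth : ContDiffOn ℝ 1 (fun s : ℝ ↦ g (u + s • h)) (Set.Icc 0 1) := by fun_prop
  simpa [(hline _).deriv] using
    enorm_sub_le_lintegral_deriv_of_contDiffOn_Icc hsmooth zero_le_one

variable [MeasurableSpace E] [BorelSpace E] {μ : Measure E} {f : E → F} {M : ℝ}
  (L : F →L[ℝ] G →L[ℝ] H)

theorem convolutionExists_of_ae_bound_of_integrable [SecondCountableTopology E] [SFinite μ]
    [μ.IsAddLeftInvariant] [μ.IsNegInvariant] {g : E → G}
    (hf : AEStronglyMeasurable f μ) (hfM : ∀ᵐ t ∂μ, ‖f t‖ ≤ M) (hg : Integrable g μ) :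
    ConvolutionExists f g L μ := by
  intro x
  refine ((hg.comp_sub_left x).norm.const_mul (‖L‖ * M)).mono'
    (hf.convolution_integrand_snd L hg.aestronglyMeasurable x) ?_
  filter_upwards [hfM] with t ht
  exact (L.le_opNorm₂ _ _).trans (by gcongr)

theorem norm_convolution_sub_convolution_le [SecondCountableTopology E] [SFinite μ]
    [μ.IsAddLeftInvariant] [μ.IsNegInvariant] {g : E → G}
    (hf : AEStronglyMeasurable f μ) (hfM : ∀ᵐ t ∂μ, ‖f t‖ ≤ M) (hg : Integrable g μ) (x y : E) :
    ‖(f ⋆[L, μ] g) x - (f ⋆[L, μ] g) y‖ ≤ ‖L‖ * M * ∫ u, ‖g (u + (x - y)) - g u‖ ∂μ := by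
  have hexists := convolutionExists_of_ae_bound_of_integrable L hf hfM hg
  have hdiff : Integrable (fun u ↦ ‖g (u + (x - y)) - g u‖) μ :=
    ((hg.comp_add_right _).sub hg).norm
  have hbound : ∀ᵐ t ∂μ, ‖L (f t) (g (x - t)) - L (f t) (g (y - t))‖ ≤
      ‖L‖ * M * ‖g (y - t + (x - y)) - g (y - t)‖ := by
    filter_upwards [hfM] with t ht
    rw [← map_sub, show y - t + (x - y) = x - t by abel]
    exact (L.le_opNorm₂ _ _).trans (by gcongr)
  calc ‖(f ⋆[L, μ] g) x - (f ⋆[L, μ] g) y‖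
      = ‖∫ t, L (f t) (g (x - t)) - L (f t) (g (y - t)) ∂μ‖ := by
        rw [integral_sub (hexists x) (hexists y), convolution_def, convolution_def]
    _ ≤ ∫ t, ‖L‖ * M * ‖g (y - t + (x - y)) - g (y - t)‖ ∂μ :=
        norm_integral_le_of_norm_le ((hdiff.comp_sub_left y).const_mul _) hbound
    _ = ‖L‖ * M * ∫ u, ‖g (u + (x - y)) - g u‖ ∂μ := by
        rw [integral_const_mul,
          integral_sub_left_eq_self (fun u ↦ ‖g (u + (x - y)) - g u‖) μ y]

variable [NormedSpace ℝ E]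

theorem lintegral_enorm_add_sub_self_le [SFinite μ] [μ.IsAddRightInvariant]
    {g : E → G} (hg : ContDiff ℝ 1 g) (h : E) :
    ∫⁻ u, ‖g (u + h) - g u‖ₑ ∂μ ≤ ∫⁻ u, ‖fderiv ℝ g u h‖ₑ ∂μ := by
  have hcont : Continuous fun p : E × ℝ ↦ ‖fderiv ℝ g (p.1 + p.2 • h) h‖ₑ := by
    have := hg.continuous_fderiv one_ne_zero
    fun_prop
  calc ∫⁻ u, ‖g (u + h) - g u‖ₑ ∂μ
      ≤ ∫⁻ u, (∫⁻ t in Set.Icc (0 : ℝ) 1, ‖fderiv ℝ g (u + t • h) h‖ₑ) ∂μ :=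
        lintegral_mono fun u ↦ enorm_add_sub_self_le_lintegral_fderiv hg u h
    _ = ∫⁻ t in Set.Icc (0 : ℝ) 1, (∫⁻ u, ‖fderiv ℝ g (u + t • h) h‖ₑ ∂μ) :=
        lintegral_lintegral_swap hcont.measurable.aemeasurable
    _ = ∫⁻ _ in Set.Icc (0 : ℝ) 1, (∫⁻ u, ‖fderiv ℝ g u h‖ₑ ∂μ) := by
        congr with t
        exact lintegral_add_right_eq_self (fun u ↦ ‖fderiv ℝ g u h‖ₑ) (t • h)
    _ = ∫⁻ u, ‖fderiv ℝ g u h‖ₑ ∂μ := by simp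

theorem integral_norm_add_sub_self_le [SecondCountableTopology E] [SFinite μ]
    [μ.IsAddRightInvariant] {g : E → G} (hg : ContDiff ℝ 1 g) {h : E}
    (hint : Integrable (fun u ↦ fderiv ℝ g u h) μ) :
    ∫ u, ‖g (u + h) - g u‖ ∂μ ≤ ∫ u, ‖fderiv ℝ g u h‖ ∂μ := by
  have hcont : Continuous fun u ↦ g (u + h) - g u := by fun_prop
  rw [integral_norm_eq_lintegral_enorm hcont.aestronglyMeasurable,
    integral_norm_eq_lintegral_enorm hint.aestronglyMeasurable]
  exact ENNReal.toReal_mono hint.2.ne (lintegral_enorm_add_sub_self_le hg h)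

variable [FiniteDimensional ℝ E] [μ.IsAddHaarMeasure]

theorem hasFDerivAt_convolution_right_of_fderiv_decay {g : E → G} {C r : ℝ}
    (hf : AEStronglyMeasurable f μ) (hfM : ∀ᵐ t ∂μ, ‖f t‖ ≤ M)
    (hg : ContDiff ℝ 1 g) (hgi : Integrable g μ) (hr : finrank ℝ E < r)
    (hdecay : ∀ u, ‖fderiv ℝ g u‖ ≤ C * (1 + ‖u‖) ^ (-r)) (x : E) :
    HasFDerivAt (f ⋆[L, μ] g) ((f ⋆[L.precompR E, μ] fderiv ℝ g) x) x := by
  have hr0 : 0 ≤ r := (Nat.cast_nonneg _).trans hr.le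
  have hC : 0 ≤ C := by simpa using (norm_nonneg _).trans (hdecay 0)
  have hM : 0 ≤ M := nonneg_of_ae_norm_le hfM
  refine hasFDerivAt_integral_of_dominated_of_fderiv_le
    (F' := fun y t ↦ (L (f t)).comp (fderiv ℝ g (y - t)))
    (bound := fun t ↦ ‖L‖ * M * (C * (2 ^ r * (1 + ‖x - t‖) ^ (-r))))
    (ball_mem_nhds x one_pos) (.of_forall fun y ↦ ?_) ?_ ?_ ?_ ?_ (.of_forall fun t y _ ↦ ?_)
  · exact hf.convolution_integrand_snd L hgi.aestronglyMeasurable y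
  · exact convolutionExists_of_ae_bound_of_integrable L hf hfM hgi x
  · exact hf.convolution_integrand_snd (L.precompR E : F →L[ℝ] (E →L[ℝ] G) →L[ℝ] E →L[ℝ] H)
      (hg.continuous_fderiv one_ne_zero).aestronglyMeasurable x
  · filter_upwards [hfM] with t ht y hy
    calc ‖(L (f t)).comp (fderiv ℝ g (y - t))‖
        ≤ ‖L (f t)‖ * ‖fderiv ℝ g (y - t)‖ := (L (f t)).opNorm_comp_le _
      _ ≤ ‖L‖ * ‖f t‖ * ‖fderiv ℝ g (y - t)‖ := by gcongr; exact L.le_opNorm _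
      _ ≤ ‖L‖ * M * (C * (2 ^ r * (1 + ‖x - t‖) ^ (-r))) := by
        gcongr
        exact (hdecay _).trans (by gcongr; exact one_add_norm_rpow_neg_le hr0 hy)
  · exact ((((integrable_one_add_norm hr).comp_sub_left x).const_mul _).const_mul _).const_mul _
  · have hshift : HasFDerivAt (fun y ↦ g (y - t)) (fderiv ℝ g (y - t)) y :=
      (hasFDerivAt_comp_sub t).2 (hg.differentiable one_ne_zero _).hasFDerivAt
    exact (L (f t)).hasFDerivAt.comp y hshift

theorem fderiv_convolution_right_apply_of_fderiv_decay {g : E → G} {C r : ℝ}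
    (hf : AEStronglyMeasurable f μ) (hfM : ∀ᵐ t ∂μ, ‖f t‖ ≤ M)
    (hg : ContDiff ℝ 1 g) (hgi : Integrable g μ) (hr : finrank ℝ E < r)
    (hdecay : ∀ u, ‖fderiv ℝ g u‖ ≤ C * (1 + ‖u‖) ^ (-r)) (x v : E) :
    fderiv ℝ (f ⋆[L, μ] g) x v = (f ⋆[L, μ] fun u ↦ fderiv ℝ g u v) x := by
  have hg' : Integrable (fderiv ℝ g) μ :=
    integrable_of_norm_le_mul_one_add_norm_rpow_neg
      (hg.continuous_fderiv one_ne_zero).aestronglyMeasurable hr hdecay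
  have hexists : ConvolutionExistsAt f (fderiv ℝ g) x (L.precompR E) μ :=
    convolutionExists_of_ae_bound_of_integrable _ hf hfM hg' x
  rw [(hasFDerivAt_convolution_right_of_fderiv_decay L hf hfM hg hgi hr hdecay x).fderiv,
    convolution_def, ContinuousLinearMap.integral_apply hexists]
  rfl

theorem norm_fderiv_convolution_sub_le {g : E → G} {C r K : ℝ}
    (hf : AEStronglyMeasurable f μ) (hfM : ∀ᵐ t ∂μ, ‖f t‖ ≤ M)
    (hg : ContDiff ℝ 2 g) (hgi : Integrable g μ) (hr : finrank ℝ E < r)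
    (hdecay : ∀ u, ‖fderiv ℝ g u‖ ≤ C * (1 + ‖u‖) ^ (-r)) (hK : 0 ≤ K)
    (hint : ∀ h v, Integrable (fun u ↦ fderiv ℝ (fderiv ℝ g) u h v) μ)
    (hbound : ∀ h v, ∫ u, ‖fderiv ℝ (fderiv ℝ g) u h v‖ ∂μ ≤ K * ‖h‖ * ‖v‖) (x y : E) :
    ‖fderiv ℝ (f ⋆[L, μ] g) x - fderiv ℝ (f ⋆[L, μ] g) y‖ ≤ ‖L‖ * M * K * ‖x - y‖ := by
  have hM : 0 ≤ M := nonneg_of_ae_norm_le hfM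
  have hg1 : ContDiff ℝ 1 g := hg.of_le one_le_two
  have hfderiv : ContDiff ℝ 1 (fderiv ℝ g) := hg.fderiv_right le_rfl
  refine ContinuousLinearMap.opNorm_le_bound _ (by positivity) fun v ↦ ?_
  have hpartial : ContDiff ℝ 1 fun u ↦ fderiv ℝ g u v := by fun_prop
  have hsecond (u h : E) : fderiv ℝ (fun w ↦ fderiv ℝ g w v) u h = fderiv ℝ (fderiv ℝ g) u h v :=
    fderiv_fderiv_apply_const (hfderiv.differentiable one_ne_zero u) v h
  have hpartial_int : Integrable (fun u ↦ fderiv ℝ g u v) μ :=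
    (integrable_of_norm_le_mul_one_add_norm_rpow_neg
      hfderiv.continuous.aestronglyMeasurable hr hdecay).apply_continuousLinearMap v
  rw [sub_apply,
    fderiv_convolution_right_apply_of_fderiv_decay L hf hfM hg1 hgi hr hdecay,
    fderiv_convolution_right_apply_of_fderiv_decay L hf hfM hg1 hgi hr hdecay]
  calc ‖(f ⋆[L, μ] fun u ↦ fderiv ℝ g u v) x - (f ⋆[L, μ] fun u ↦ fderiv ℝ g u v) y‖
      ≤ ‖L‖ * M * ∫ u, ‖fderiv ℝ g (u + (x - y)) v - fderiv ℝ g u v‖ ∂μ :=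
        norm_convolution_sub_convolution_le L hf hfM hpartial_int x y
    _ ≤ ‖L‖ * M * ∫ u, ‖fderiv ℝ (fderiv ℝ g) u (x - y) v‖ ∂μ := by
        refine mul_le_mul_of_nonneg_left ?_ (by positivity)
        simpa only [hsecond] using
          integral_norm_add_sub_self_le hpartial (by simpa only [hsecond] using hint (x - y) v)
    _ ≤ ‖L‖ * M * (K * ‖x - y‖ * ‖v‖) :=
        mul_le_mul_of_nonneg_left (hbound _ _) (by positivity)
    _ = ‖L‖ * M * K * ‖x - y‖ * ‖v‖ := by ring

end Convolution

section Gaussian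

theorem one_add_pow_mul_exp_neg_mul_sq_le {b s : ℝ} (hb : 0 < b) (hs : 0 ≤ s) (n : ℕ) :
    (1 + s) ^ n * exp (-(b * s ^ 2)) ≤ n ! * exp (1 + 1 / (4 * b)) := by
  have hpow : (1 + s) ^ n ≤ n ! * exp (1 + s) := by
    have := pow_div_factorial_le_exp (1 + s) (by positivity) n
    rwa [div_le_iff₀' (by positivity)] at this
  have hsquare : s - b * s ^ 2 ≤ 1 / (4 * b) := by
    rw [le_div_iff₀ (by positivity)]
    nlinarith [sq_nonneg (2 * b * s - 1)]
  calc (1 + s) ^ n * exp (-(b * s ^ 2))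
      ≤ n ! * exp (1 + s) * exp (-(b * s ^ 2)) := by gcongr
    _ = n ! * exp (1 + (s - b * s ^ 2)) := by
        rw [mul_assoc, ← exp_add]
        ring_nf
    _ ≤ n ! * exp (1 + 1 / (4 * b)) := by gcongr

variable {E : Type*} [NormedAddCommGroup E] [InnerProductSpace ℝ E]

/-- The density of the isotropic Gaussian `N(0, σ²I)` on a Euclidean space, written without
coordinates; on `EuclideanSpace ℝ (Fin d)` it is `gaussDensity`. -/
noncomputable def isotropicGaussianPDF (σ : ℝ) (u : E) : ℝ :=
  (2 * π * σ ^ 2) ^ (-(finrank ℝ E : ℝ) / 2) * exp (-‖u‖ ^ 2 / (2 * σ ^ 2))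

variable {σ : ℝ}

theorem isotropicGaussianPDF_nonneg (u : E) : 0 ≤ isotropicGaussianPDF σ u := by
  unfold isotropicGaussianPDF
  positivity

theorem isotropicGaussianPDF_sub_comm (u v : E) :
    isotropicGaussianPDF σ (u - v) = isotropicGaussianPDF σ (v - u) := by
  rw [isotropicGaussianPDF, isotropicGaussianPDF, norm_sub_rev]

theorem contDiff_isotropicGaussianPDF {n : WithTop ℕ∞} :
    ContDiff ℝ n (isotropicGaussianPDF σ : E → ℝ) :=
  contDiff_const.mul (((contDiff_norm_sq ℝ).neg.div_const _).exp)

theorem fderiv_isotropicGaussianPDF (u : E) :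
    fderiv ℝ (isotropicGaussianPDF σ) u =
      isotropicGaussianPDF σ u • (-(σ ^ 2)⁻¹ • innerSL ℝ u) := by
  have hexp : HasFDerivAt (isotropicGaussianPDF σ) _ u :=
    (((hasStrictFDerivAt_norm_sq u).hasFDerivAt.neg.mul_const (2 * σ ^ 2)⁻¹).exp).const_mul
      ((2 * π * σ ^ 2) ^ (-(finrank ℝ E : ℝ) / 2))
  rw [hexp.fderiv]
  ext v
  simp only [isotropicGaussianPDF, div_eq_mul_inv, Pi.neg_apply, mul_inv_rev, smul_neg, neg_smul,
    neg_apply, smul_apply, coe_innerSL_apply, nsmul_eq_mul, Nat.cast_ofNat, smul_eq_mul]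
  ring

theorem fderiv_fderiv_isotropicGaussianPDF_apply (u h v : E) :
    fderiv ℝ (fderiv ℝ (isotropicGaussianPDF σ)) u h v =
      isotropicGaussianPDF σ u * (⟪u, h⟫_ℝ * ⟪u, v⟫_ℝ / σ ^ 4 - ⟪h, v⟫_ℝ / σ ^ 2) := by
  have hpdf : DifferentiableAt ℝ (isotropicGaussianPDF σ) u :=
    contDiff_isotropicGaussianPDF.differentiable one_ne_zero u
  have hinner : HasFDerivAt (fun w : E ↦ -(σ ^ 2)⁻¹ • innerSL ℝ w)
      (-(σ ^ 2)⁻¹ • (innerSL ℝ : E →L[ℝ] E →L[ℝ] ℝ)) u :=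
    (innerSL ℝ : E →L[ℝ] E →L[ℝ] ℝ).hasFDerivAt.fun_const_smul _
  have hcoe : (innerSL ℝ : E →L[ℝ] E →L[ℝ] ℝ) h v = ⟪h, v⟫_ℝ := rfl
  rw [funext fderiv_isotropicGaussianPDF, (hpdf.hasFDerivAt.fun_smul hinner).fderiv,
    fderiv_isotropicGaussianPDF]
  simp only [neg_smul, smul_neg, add_apply, smul_apply, ContinuousLinearMap.smulRight_apply,
    neg_apply, innerSL_apply_apply, hcoe, smul_eq_mul]
  ring

theorem exists_norm_isotropicGaussianPDF_smul_le {G : Type*} [NormedAddCommGroup G]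
    [NormedSpace ℝ G] (hσ : σ ≠ 0) {p : E → G} {A : ℝ} {m : ℕ}
    (hp : ∀ u, ‖p u‖ ≤ A * (1 + ‖u‖) ^ m) (n : ℕ) :
    ∃ C, ∀ u, ‖isotropicGaussianPDF σ u • p u‖ ≤ C * (1 + ‖u‖) ^ (-(n : ℝ)) := by
  have hA : 0 ≤ A := by simpa using (norm_nonneg _).trans (hp 0)
  set c := (2 * π * σ ^ 2) ^ (-(finrank ℝ E : ℝ) / 2) with hc
  have : 0 ≤ c := by positivity
  set b := (2 * σ ^ 2)⁻¹
  have hb : 0 < b := by positivity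
  refine ⟨c * A * ((m + n)! * exp (1 + 1 / (4 * b))), fun u ↦ ?_⟩
  rw [rpow_neg (by positivity), rpow_natCast, ← div_eq_mul_inv, le_div_iff₀ (by positivity)]
  calc ‖isotropicGaussianPDF σ u • p u‖ * (1 + ‖u‖) ^ n
      ≤ isotropicGaussianPDF σ u * (A * (1 + ‖u‖) ^ m) * (1 + ‖u‖) ^ n := by
        rw [norm_smul, norm_of_nonneg (isotropicGaussianPDF_nonneg u)]
        gcongr
        · exact isotropicGaussianPDF_nonneg u
        · exact hp u
    _ = c * A * ((1 + ‖u‖) ^ (m + n) * exp (-(b * ‖u‖ ^ 2))) := by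
        rw [isotropicGaussianPDF, ← hc, neg_div, div_eq_inv_mul, pow_add]
        ring
    _ ≤ c * A * ((m + n)! * exp (1 + 1 / (4 * b))) := by
        gcongr ?_ * ?_
        exact one_add_pow_mul_exp_neg_mul_sq_le hb (norm_nonneg u) (m + n)

theorem exists_norm_fderiv_isotropicGaussianPDF_le (hσ : σ ≠ 0) (n : ℕ) :
    ∃ C, ∀ u : E, ‖fderiv ℝ (isotropicGaussianPDF σ) u‖ ≤ C * (1 + ‖u‖) ^ (-(n : ℝ)) := by
  simp only [fderiv_isotropicGaussianPDF]
  have hlinear (u : E) : ‖-(σ ^ 2)⁻¹ • innerSL ℝ u‖ ≤ (σ ^ 2)⁻¹ * (1 + ‖u‖) ^ 1 := by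
    rw [norm_smul, norm_neg, norm_of_nonneg (by positivity), innerSL_apply_norm, pow_one]
    gcongr
    exact le_add_of_nonneg_left zero_le_one
  exact exists_norm_isotropicGaussianPDF_smul_le hσ hlinear n

variable [FiniteDimensional ℝ E] [MeasurableSpace E] [BorelSpace E]

theorem integrable_isotropicGaussianPDF_smul {G : Type*} [NormedAddCommGroup G]
    [NormedSpace ℝ G] (hσ : σ ≠ 0) {p : E → G} (hpc : Continuous p) {A : ℝ} {m : ℕ}
    (hp : ∀ u, ‖p u‖ ≤ A * (1 + ‖u‖) ^ m) :
    Integrable fun u ↦ isotropicGaussianPDF σ u • p u := by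
  obtain ⟨C, hC⟩ := exists_norm_isotropicGaussianPDF_smul_le hσ hp (finrank ℝ E + 1)
  have hcont : Continuous fun u ↦ isotropicGaussianPDF σ u • p u :=
    (contDiff_isotropicGaussianPDF (n := 0)).continuous.smul hpc
  exact integrable_of_norm_le_mul_one_add_norm_rpow_neg hcont.aestronglyMeasurable (by simp) hC

theorem integrable_isotropicGaussianPDF (hσ : σ ≠ 0) :
    Integrable (isotropicGaussianPDF σ : E → ℝ) := by
  simpa using integrable_isotropicGaussianPDF_smul (E := E) hσ (continuous_const (y := (1 : ℝ)))
    (A := 1) (m := 0) (by simp)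

theorem integral_isotropicGaussianPDF (hσ : σ ≠ 0) :
    ∫ u : E, isotropicGaussianPDF σ u = 1 := by
  have hpos : 0 < 2 * π * σ ^ 2 := by positivity
  have hexponent (u : E) : -‖u‖ ^ 2 / (2 * σ ^ 2) = -(2 * σ ^ 2)⁻¹ * ‖u‖ ^ 2 := by ring
  have hbase : π / (2 * σ ^ 2)⁻¹ = 2 * π * σ ^ 2 := by
    rw [div_inv_eq_mul]
    ring
  simp only [isotropicGaussianPDF, hexponent]
  rw [integral_const_mul, GaussianFourier.integral_rexp_neg_mul_sq_norm (by positivity), hbase,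
    ← rpow_add hpos, neg_div, neg_add_cancel, rpow_zero]

theorem integrable_isotropicGaussianPDF_mul_inner (hσ : σ ≠ 0) (v : E) :
    Integrable fun u ↦ isotropicGaussianPDF σ u * ⟪u, v⟫_ℝ := by
  refine integrable_isotropicGaussianPDF_smul hσ (by fun_prop) (A := ‖v‖) (m := 1) fun u ↦ ?_
  calc ‖⟪u, v⟫_ℝ‖ ≤ ‖u‖ * ‖v‖ := norm_inner_le_norm u v
    _ ≤ ‖v‖ * (1 + ‖u‖) ^ 1 := by nlinarith [norm_nonneg v]

theorem integrable_isotropicGaussianPDF_mul_inner_mul_inner (hσ : σ ≠ 0) (v w : E) :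
    Integrable fun u ↦ isotropicGaussianPDF σ u * (⟪u, v⟫_ℝ * ⟪u, w⟫_ℝ) := by
  refine integrable_isotropicGaussianPDF_smul hσ (by fun_prop) (A := ‖v‖ * ‖w‖) (m := 2)
    fun u ↦ ?_
  calc ‖⟪u, v⟫_ℝ * ⟪u, w⟫_ℝ‖ ≤ (‖u‖ * ‖v‖) * (‖u‖ * ‖w‖) := by
        rw [norm_mul]
        gcongr <;> exact norm_inner_le_norm _ _
    _ = ‖v‖ * ‖w‖ * ‖u‖ ^ 2 := by ring
    _ ≤ ‖v‖ * ‖w‖ * (1 + ‖u‖) ^ 2 := by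
        gcongr
        exact le_add_of_nonneg_left zero_le_one

theorem integrable_isotropicGaussianPDF_mul_abs_inner_mul_inner (hσ : σ ≠ 0) (v w : E) :
    Integrable fun u ↦ isotropicGaussianPDF σ u * |⟪u, v⟫_ℝ * ⟪u, w⟫_ℝ| := by
  refine (integrable_isotropicGaussianPDF_mul_inner_mul_inner hσ v w).norm.congr
    (.of_forall fun u ↦ ?_)
  simp only [norm_mul, norm_of_nonneg (isotropicGaussianPDF_nonneg u), norm_eq_abs, abs_mul]

theorem integral_isotropicGaussianPDF_mul_inner_sq (hσ : σ ≠ 0) (v : E) :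
    ∫ u, isotropicGaussianPDF σ u * ⟪u, v⟫_ℝ ^ 2 = σ ^ 2 * ‖v‖ ^ 2 := by
  have hderiv (u : E) : ⟪v, u⟫_ℝ * fderiv ℝ (isotropicGaussianPDF σ) u v =
      -(σ ^ 2)⁻¹ * (isotropicGaussianPDF σ u * (⟪u, v⟫_ℝ * ⟪u, v⟫_ℝ)) := by
    rw [fderiv_isotropicGaussianPDF, real_inner_comm]
    simp only [neg_smul, smul_neg, neg_apply, smul_apply, innerSL_apply_apply, smul_eq_mul]
    ring
  have hparts := integral_mul_fderiv_eq_neg_fderiv_mul_of_integrable (μ := volume)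
    (f := innerSL ℝ v) (g := isotropicGaussianPDF σ) (v := v)
    (by simpa only [ContinuousLinearMap.fderiv, innerSL_apply_apply, real_inner_self_eq_norm_sq]
      using (integrable_isotropicGaussianPDF (E := E) hσ).const_mul (‖v‖ ^ 2))
    (by simpa [hderiv] using
      (integrable_isotropicGaussianPDF_mul_inner_mul_inner hσ v v).const_mul (-(σ ^ 2)⁻¹))
    (by simpa [mul_comm, real_inner_comm] using integrable_isotropicGaussianPDF_mul_inner hσ v)
    (fun u _ ↦ (innerSL ℝ v).differentiableAt)
    (fun u _ ↦ contDiff_isotropicGaussianPDF.differentiable one_ne_zero u)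
  simp only [innerSL_apply_apply, hderiv, ContinuousLinearMap.fderiv, integral_const_mul,
    integral_isotropicGaussianPDF hσ, real_inner_self_eq_norm_sq, ← sq] at hparts
  field_simp at hparts
  linarith

theorem integral_isotropicGaussianPDF_mul_abs_inner_mul_inner_le (hσ : σ ≠ 0) (v w : E) :
    ∫ u, isotropicGaussianPDF σ u * |⟪u, v⟫_ℝ * ⟪u, w⟫_ℝ| ≤ σ ^ 2 * (‖v‖ * ‖w‖) := by
  rcases eq_or_ne v 0 with rfl | hv
  · simp
  rcases eq_or_ne w 0 with rfl | hw
  · simp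
  have hamgm (u : E) : 2 * ‖v‖ * ‖w‖ * (isotropicGaussianPDF σ u * |⟪u, v⟫_ℝ * ⟪u, w⟫_ℝ|) ≤
      ‖w‖ ^ 2 * (isotropicGaussianPDF σ u * ⟪u, v⟫_ℝ ^ 2) +
        ‖v‖ ^ 2 * (isotropicGaussianPDF σ u * ⟪u, w⟫_ℝ ^ 2) := by
    have := two_mul_le_add_sq (‖w‖ * |⟪u, v⟫_ℝ|) (‖v‖ * |⟪u, w⟫_ℝ|)
    rw [mul_pow, mul_pow, sq_abs, sq_abs] at this
    have hpdf := isotropicGaussianPDF_nonneg (σ := σ) u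
    rw [abs_mul]
    linear_combination isotropicGaussianPDF σ u * this
  have hcross := integrable_isotropicGaussianPDF_mul_abs_inner_mul_inner hσ v w
  have hsq (v' : E) : Integrable fun u ↦ isotropicGaussianPDF σ u * ⟪u, v'⟫_ℝ ^ 2 := by
    simpa only [sq] using integrable_isotropicGaussianPDF_mul_inner_mul_inner hσ v' v'
  refine le_of_mul_le_mul_left ?_ (show 0 < 2 * ‖v‖ * ‖w‖ by positivity)
  rw [← integral_const_mul]
  calc ∫ u, 2 * ‖v‖ * ‖w‖ * (isotropicGaussianPDF σ u * |⟪u, v⟫_ℝ * ⟪u, w⟫_ℝ|)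
      ≤ ∫ u, (‖w‖ ^ 2 * (isotropicGaussianPDF σ u * ⟪u, v⟫_ℝ ^ 2) +
          ‖v‖ ^ 2 * (isotropicGaussianPDF σ u * ⟪u, w⟫_ℝ ^ 2)) :=
        integral_mono (hcross.const_mul _)
          (((hsq v).const_mul _).add ((hsq w).const_mul _)) hamgm
    _ = ‖w‖ ^ 2 * (σ ^ 2 * ‖v‖ ^ 2) + ‖v‖ ^ 2 * (σ ^ 2 * ‖w‖ ^ 2) := by
        rw [integral_add ((hsq v).const_mul _) ((hsq w).const_mul _), integral_const_mul,
          integral_const_mul, integral_isotropicGaussianPDF_mul_inner_sq hσ,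
          integral_isotropicGaussianPDF_mul_inner_sq hσ]
    _ = 2 * ‖v‖ * ‖w‖ * (σ ^ 2 * (‖v‖ * ‖w‖)) := by ring

theorem integrable_fderiv_fderiv_isotropicGaussianPDF_apply (hσ : σ ≠ 0) (h v : E) :
    Integrable fun u ↦ fderiv ℝ (fderiv ℝ (isotropicGaussianPDF σ)) u h v := by
  have hdiff := ((integrable_isotropicGaussianPDF_mul_inner_mul_inner hσ h v).div_const
    (σ ^ 4)).sub ((integrable_isotropicGaussianPDF hσ).mul_const (⟪h, v⟫_ℝ / σ ^ 2))
  refine hdiff.congr (.of_forall fun u ↦ ?_)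
  simp only [Pi.sub_apply, fderiv_fderiv_isotropicGaussianPDF_apply]
  ring

theorem integral_norm_fderiv_fderiv_isotropicGaussianPDF_le (hσ : σ ≠ 0) (h v : E) :
    ∫ u, ‖fderiv ℝ (fderiv ℝ (isotropicGaussianPDF σ)) u h v‖ ≤ 2 / σ ^ 2 * ‖h‖ * ‖v‖ := by
  have hpointwise (u : E) : ‖fderiv ℝ (fderiv ℝ (isotropicGaussianPDF σ)) u h v‖ ≤
      (σ ^ 4)⁻¹ * (isotropicGaussianPDF σ u * |⟪u, h⟫_ℝ * ⟪u, v⟫_ℝ|) +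
        (σ ^ 2)⁻¹ * |⟪h, v⟫_ℝ| * isotropicGaussianPDF σ u := by
    have hpdf := isotropicGaussianPDF_nonneg (σ := σ) u
    have htriangle := abs_sub (⟪u, h⟫_ℝ * ⟪u, v⟫_ℝ / σ ^ 4) (⟪h, v⟫_ℝ / σ ^ 2)
    rw [abs_div, abs_div, abs_of_nonneg (by positivity : 0 ≤ σ ^ 4),
      abs_of_nonneg (by positivity : 0 ≤ σ ^ 2)] at htriangle
    rw [fderiv_fderiv_isotropicGaussianPDF_apply, norm_mul, norm_of_nonneg hpdf,
      norm_eq_abs]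
    linear_combination isotropicGaussianPDF σ u * htriangle
  have hcross : Integrable fun u : E ↦
      (σ ^ 4)⁻¹ * (isotropicGaussianPDF σ u * |⟪u, h⟫_ℝ * ⟪u, v⟫_ℝ|) :=
    (integrable_isotropicGaussianPDF_mul_abs_inner_mul_inner hσ h v).const_mul _
  have hmass : Integrable fun u : E ↦ (σ ^ 2)⁻¹ * |⟪h, v⟫_ℝ| * isotropicGaussianPDF σ u :=
    (integrable_isotropicGaussianPDF hσ).const_mul _
  calc ∫ u, ‖fderiv ℝ (fderiv ℝ (isotropicGaussianPDF σ)) u h v‖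
      ≤ ∫ u, ((σ ^ 4)⁻¹ * (isotropicGaussianPDF σ u * |⟪u, h⟫_ℝ * ⟪u, v⟫_ℝ|) +
          (σ ^ 2)⁻¹ * |⟪h, v⟫_ℝ| * isotropicGaussianPDF σ u) :=
        integral_mono (integrable_fderiv_fderiv_isotropicGaussianPDF_apply hσ h v).norm
          (hcross.add hmass) hpointwise
    _ = (σ ^ 4)⁻¹ * (∫ u, isotropicGaussianPDF σ u * |⟪u, h⟫_ℝ * ⟪u, v⟫_ℝ|) +
          (σ ^ 2)⁻¹ * |⟪h, v⟫_ℝ| := by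
        rw [integral_add hcross hmass, integral_const_mul, integral_const_mul,
          integral_isotropicGaussianPDF hσ, mul_one]
    _ ≤ (σ ^ 4)⁻¹ * (σ ^ 2 * (‖h‖ * ‖v‖)) + (σ ^ 2)⁻¹ * (‖h‖ * ‖v‖) := by
        gcongr
        · exact integral_isotropicGaussianPDF_mul_abs_inner_mul_inner_le hσ h v
        · exact abs_real_inner_le_norm h v
    _ = 2 / σ ^ 2 * ‖h‖ * ‖v‖ := by
        field_simp
        ring

end Gaussian

theorem norm_gradient_sub_gradient {𝕜 E : Type*} [RCLike 𝕜] [NormedAddCommGroup E]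
    [InnerProductSpace 𝕜 E] [CompleteSpace E] (f g : E → 𝕜) (x y : E) :
    ‖gradient f x - gradient g y‖ = ‖fderiv 𝕜 f x - fderiv 𝕜 g y‖ := by
  rw [gradient, gradient, ← map_sub, LinearIsometryEquiv.norm_map]

theorem isotropicGaussianPDF_euclideanSpace {d : ℕ} (σ : ℝ) (u : EuclideanSpace ℝ (Fin d)) :
    isotropicGaussianPDF σ u = gaussDensity σ u := by
  rw [isotropicGaussianPDF, gaussDensity, finrank_euclideanSpace_fin]

theorem integral_isotropicGaussianPDF_smul_eq_convolution {E G : Type*} [NormedAddCommGroup E]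
    [InnerProductSpace ℝ E] [FiniteDimensional ℝ E] [MeasurableSpace E] [BorelSpace E]
    [NormedAddCommGroup G] [NormedSpace ℝ G] (f : E → G) (σ : ℝ) :
    (fun y ↦ ∫ z, isotropicGaussianPDF σ (z - y) • f z) =
      f ⋆[(ContinuousLinearMap.lsmul ℝ ℝ).flip, volume] isotropicGaussianPDF σ := by
  ext y
  simp only [convolution_def, ContinuousLinearMap.flip_apply, ContinuousLinearMap.lsmul_apply,
    isotropicGaussianPDF_sub_comm y]

theorem smoothgrad_globally_robust_general {E G : Type*} [NormedAddCommGroup E]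
    [InnerProductSpace ℝ E] [FiniteDimensional ℝ E] [MeasurableSpace E] [BorelSpace E]
    [NormedAddCommGroup G] [NormedSpace ℝ G] [CompleteSpace G] {f : E → G} {σ F : ℝ}
    (hσ : σ ≠ 0) (hf : AEStronglyMeasurable f) (hfF : ∀ᵐ z, ‖f z‖ ≤ F) (x x' : E) :
    ‖fderiv ℝ (fun y ↦ ∫ z, isotropicGaussianPDF σ (z - y) • f z) x -
        fderiv ℝ (fun y ↦ ∫ z, isotropicGaussianPDF σ (z - y) • f z) x'‖ ≤
      2 * F / σ ^ 2 * ‖x - x'‖ := by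
  have hF : 0 ≤ F := nonneg_of_ae_norm_le hfF
  set L : G →L[ℝ] ℝ →L[ℝ] G := (ContinuousLinearMap.lsmul ℝ ℝ).flip with hL
  have hL_norm : ‖L‖ ≤ 1 := by
    rw [hL, ContinuousLinearMap.opNorm_flip]
    exact ContinuousLinearMap.opNorm_lsmul_le
  obtain ⟨C, hC⟩ := exists_norm_fderiv_isotropicGaussianPDF_le (E := E) hσ (finrank ℝ E + 1)
  rw [integral_isotropicGaussianPDF_smul_eq_convolution]
  calc _ ≤ ‖L‖ * F * (2 / σ ^ 2) * ‖x - x'‖ :=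
        norm_fderiv_convolution_sub_le L hf hfF contDiff_isotropicGaussianPDF
          (integrable_isotropicGaussianPDF hσ) (by simp) hC (by positivity)
          (integrable_fderiv_fderiv_isotropicGaussianPDF_apply hσ)
          (integral_norm_fderiv_fderiv_isotropicGaussianPDF_le hσ) x x'
    _ ≤ 1 * F * (2 / σ ^ 2) * ‖x - x'‖ := by gcongr
    _ = 2 * F / σ ^ 2 * ‖x - x'‖ := by ring

/-- For `f : ℝ^d → ℝ` measurable with `sup |f| = F < ∞` and `σ > 0`, the
gradient `g` of the Gaussian-smoothed function `F_σ(x) = ∫ f(z) dN(x, σ²I)(z)` (i.e. the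
Smooth Gradient) is globally Lipschitz with constant at most `2F/σ²`:
`‖g(x) − g(x')‖₂ ≤ (2F/σ²)·‖x − x'‖₂`. -/
theorem smoothgrad_globally_robust {d : ℕ} (f : EuclideanSpace ℝ (Fin d) → ℝ)
    (σ F : ℝ) (hσ : 0 < σ) (hf : Measurable f) (hfb : ∀ z, |f z| ≤ F) :
    ∀ x x' : EuclideanSpace ℝ (Fin d),
      ‖gradient (fun y => ∫ z, gaussDensity σ (z - y) * f z) x -
          gradient (fun y => ∫ z, gaussDensity σ (z - y) * f z) x'‖ ≤
        2 * F / σ ^ 2 * ‖x - x'‖ := by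
  intro x x'
  simpa only [norm_gradient_sub_gradient, isotropicGaussianPDF_euclideanSpace, smul_eq_mul] using
    smoothgrad_globally_robust_general hσ.ne' hf.aestronglyMeasurable (.of_forall hfb) x x'
end
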